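/- Closed orbit-counting formula: |D_n / S_n| = ∑_{λ ⊢ n} (∏_k k^{m_k} m_k!)^{-1} · 4^{∑_k m_k} · 2^{f(λ)}, where the sum runs over partitions λ of n with m_k parts of size k, and f(λ) = ∑_k (m_k⌊k/2⌋ + k·C(m_k,2)) + ∑_{k₁<k₂} m_{k₁} m_{k₂} gcd(k₁,k₂). -/

import Mathlib

open BigOperators

/-- The exponent data of the diagonal Clifford group `D_n ≅ ℤ₄ⁿ × ℤ₂^{C(n,2)}`. -/
def DElem (n : ℕ) :=
  {ab : (Fin n → ZMod 4) × (Sym2 (Fin n) → ZMod 2) // ∀ s, s.IsDiag → ab.2 s = 0}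

/-- The number of orbits of the symmetric group acting on `D_n` by qubit permutations. -/
noncomputable def diagOrbitCount (n : ℕ) : ℕ :=
  Nat.card (Set.range fun x : DElem n =>
    {y : DElem n | ∃ σ : Equiv.Perm (Fin n),
      (∀ j, y.1.1 j = x.1.1 (σ⁻¹ j)) ∧ (∀ s, y.1.2 s = x.1.2 (Sym2.map (⇑σ⁻¹) s))})

/-- Multiplicity `m_k` of parts of size `k` in a partition `λ ⊢ n`. -/
def mPart (n : ℕ) (lam : Nat.Partition n) (k : ℕ) : ℕ := Multiset.count k lam.parts

/-- `f(λ) = ∑_k (m_k ⌊k/2⌋ + k·C(m_k,2)) + ∑_{k₁<k₂} m_{k₁} m_{k₂} gcd(k₁,k₂)`. -/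
def fPart (n : ℕ) (lam : Nat.Partition n) : ℕ :=
  (∑ k ∈ Finset.Icc 1 n, (mPart n lam k * (k / 2) + k * Nat.choose (mPart n lam k) 2)) +
    ∑ k₁ ∈ Finset.Icc 1 n, ∑ k₂ ∈ Finset.Icc (k₁ + 1) n,
      mPart n lam k₁ * mPart n lam k₂ * Nat.gcd k₁ k₂

/-!
By Burnside's lemma `|D_n / S_n|` is the average over `σ ∈ S_n` of the number of elements fixed
by `σ`. A function is fixed by `σ` exactly when it is constant on `⟨σ⟩`-orbits, so this number is
`4 ^ a * 2 ^ b`, where `a` and `b` count the `⟨σ⟩`-orbits on points and on unordered pairs. Both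
are computed by a second use of Burnside's lemma, now for `⟨σ⟩`. An unordered pair fixed by `g`
either consists of two fixed points or is swapped by `g`, whence
`2 |Fix_pairs g| + 2 |Fix g| = |Fix g|² + |Fix g²|`. Averaging over the powers of `σ` turns the
right-hand side into `∑ m_k m_l gcd(k, l) + ∑ m_k gcd(k, 2)`, which is `2 f(λ) + 2 ∑ m_k`. Both
`a` and `b` depend only on the cycle type of `σ`, so it remains to count each cycle type.
-/

namespace DiagonalClifford

open MulAction Finset
open scoped Nat

section Burnside

theorem sum_natCard_fixedBy (G Z : Type*) [Group G] [Fintype G] [MulAction G Z] [Finite Z] :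
    ∑ g : G, Nat.card (fixedBy Z g) = Nat.card (orbitRel.Quotient G Z) * Nat.card G := by
  classical
  have := Fintype.ofFinite Z
  simp only [Nat.card_eq_fintype_card]
  exact sum_card_fixedBy_eq_card_orbits_mul_card_group G Z

variable {G Z : Type*} [Group G] [MulAction G Z]

theorem sum_card_fixedBy_pow [Finite G] [Finite Z] (g : G) :
    ∑ i ∈ range (orderOf g), Nat.card (fixedBy Z (g ^ i)) =
      orderOf g * Nat.card (orbitRel.Quotient (Subgroup.zpowers g) Z) := by
  have := Fintype.ofFinite (Subgroup.zpowers g)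
  have burnside := sum_natCard_fixedBy (Subgroup.zpowers g) Z
  rw [← Equiv.sum_comp (finEquivZPowers (isOfFinOrder_of_finite g)), Nat.card_zpowers,
    mul_comm] at burnside
  rw [← Fin.sum_univ_eq_sum_range fun i ↦ Nat.card (fixedBy Z (g ^ i)), ← burnside]
  rfl

theorem card_fixedBy_pow [Fintype Z] (g : G) (i : ℕ) :
    Nat.card (fixedBy Z (g ^ i)) = #{z : Z | period g z ∣ i} :=
  Nat.subtype_card _ fun z ↦ by
    rw [mem_filter_univ, mem_fixedBy, pow_smul_eq_iff_period_dvd]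

end Burnside

section InvariantFunctions

attribute [local instance] arrowAction

variable {G Z A : Type*} [Group G] [MulAction G Z]

theorem mem_fixedBy_arrow_iff {g : G} {f : Z → A} :
    f ∈ fixedBy (Z → A) g ↔ orbitRel (Subgroup.zpowers g) Z ≤ Setoid.ker f := by
  constructor
  · rintro hf _ z ⟨⟨_, k, rfl⟩, rfl⟩
    have hfz : f ((g ^ (-k))⁻¹ • z) = f z := congrFun (mem_fixedBy_zpow hf (-k)) z
    rwa [zpow_neg, inv_inv] at hfz
  · intro hf
    funext z
    exact hf ⟨⟨g⁻¹, inv_mem (Subgroup.mem_zpowers g)⟩, rfl⟩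

theorem card_fixedBy_arrow [Finite Z] (g : G) :
    Nat.card (fixedBy (Z → A) g) =
      Nat.card A ^ Nat.card (orbitRel.Quotient (Subgroup.zpowers g) Z) := by
  rw [← Nat.card_fun]
  exact Nat.card_congr
    ((Equiv.subtypeEquivRight fun _ ↦ mem_fixedBy_arrow_iff).trans (Setoid.liftEquiv _))

end InvariantFunctions

theorem card_filter_range_dvd {d N : ℕ} (hd : d ∣ N) (hN : 0 < N) :
    (#{i ∈ range N | d ∣ i} : ℚ) = N / d := by
  have count_multiples := Nat.count_modEq_card N (Nat.pos_of_dvd_of_pos hd hN) 0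
  simp only [Nat.modEq_zero_iff_dvd, Nat.count_eq_card_filter_range,
    Nat.mod_eq_zero_of_dvd hd, Nat.not_lt_zero, if_false, add_zero] at count_multiples
  rw [count_multiples, Nat.cast_div_charZero hd]

theorem card_filter_range_dvd_mul {d N : ℕ} (hd : d ∣ N) (hN : 0 < N) (m : ℕ) :
    (#{i ∈ range N | d ∣ m * i} : ℚ) = N * (d.gcd m / d) := by
  have gcd_dvd : d.gcd m ∣ d := Nat.gcd_dvd_left d m
  have gcd_pos : 0 < d.gcd m := Nat.gcd_pos_of_pos_left m (Nat.pos_of_dvd_of_pos hd hN)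
  have dvd_mul_iff (i : ℕ) : d ∣ m * i ↔ d / d.gcd m ∣ i := by
    rw [Nat.div_dvd_iff_dvd_mul gcd_dvd gcd_pos, Nat.dvd_gcd_mul_iff_dvd_mul]
  simp only [dvd_mul_iff]
  rw [card_filter_range_dvd ((Nat.div_dvd_of_dvd gcd_dvd).trans hd) hN,
    Nat.cast_div_charZero gcd_dvd, div_div_eq_mul_div, mul_div_assoc]

theorem card_filter_range_dvd_and_dvd {a b N : ℕ} (ha : a ∣ N) (hb : b ∣ N) (hN : 0 < N) :
    (#{i ∈ range N | a ∣ i ∧ b ∣ i} : ℚ) = N * (a.gcd b / (a * b)) := by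
  have ha_pos := Nat.pos_of_dvd_of_pos ha hN
  have hb_pos := Nat.pos_of_dvd_of_pos hb hN
  have := Nat.lcm_pos ha_pos hb_pos
  simp only [← Nat.lcm_dvd_iff]
  rw [card_filter_range_dvd (Nat.lcm_dvd ha hb) hN, ← Nat.cast_mul a b, ← Nat.gcd_mul_lcm]
  have := Nat.gcd_pos_of_pos_left b ha_pos
  push_cast
  field_simp

theorem sum_parts_map {n : ℕ} (lam : n.Partition) (f : ℕ → ℚ) :
    (lam.parts.map f).sum = ∑ k ∈ Icc 1 n, mPart n lam k * f k := by
  have parts_subset : lam.parts.toFinset ⊆ Icc 1 n := fun k hk ↦ by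
    rw [Multiset.mem_toFinset] at hk
    exact mem_Icc.2 ⟨lam.parts_pos hk, lam.le_of_mem_parts hk⟩
  rw [sum_multiset_map_count]
  simp only [nsmul_eq_mul]
  refine sum_subset parts_subset fun k _ hk ↦ ?_
  rw [Multiset.count_eq_zero_of_notMem (by simpa using hk), Nat.cast_zero, zero_mul]

section CycleLengths

open Equiv.Perm

variable {X : Type*} [Fintype X] [DecidableEq X] (σ : Equiv.Perm X)

theorem period_eq_card_support_cycleOf {x : X} (hx : σ x ≠ x) :
    period σ x = #(σ.cycleOf x).support := by
  classical
  have mem_orbit_iff (y : X) : y ∈ orbit (Subgroup.zpowers σ) x ↔ y ∈ (σ.cycleOf x).support := by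
    rw [mem_support_cycleOf_iff' hx]
    simp [SameCycle, orbit, Subgroup.smul_def]
  rw [period_eq_minimalPeriod, minimalPeriod_eq_card]
  exact Fintype.card_of_subtype _ fun y ↦ (mem_orbit_iff y).symm

theorem filter_cycleOf_eq_support {c : Equiv.Perm X} (hc : c ∈ σ.cycleFactorsFinset) :
    {x ∈ σ.support | σ.cycleOf x = c} = c.support := by
  ext x
  rw [mem_filter]
  constructor
  · rintro ⟨hx, rfl⟩
    exact (mem_support_cycleOf_iff' (mem_support.1 hx)).2 (SameCycle.refl σ x)
  · exact fun hx ↦ ⟨mem_cycleFactorsFinset_support_le hc hx, (cycle_is_cycleOf hx hc).symm⟩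

theorem sum_cycle_comp_period {c : Equiv.Perm X} (hc : c ∈ σ.cycleFactorsFinset) (f : ℕ → ℚ) :
    ∑ x ∈ c.support, f (period σ x) = #c.support * f #c.support := by
  have period_eq (x : X) (hx : x ∈ c.support) : f (period σ x) = f #c.support := by
    rw [period_eq_card_support_cycleOf σ
      (mem_support.1 (mem_cycleFactorsFinset_support_le hc hx)), ← cycle_is_cycleOf hx hc]
  rw [sum_congr rfl period_eq, sum_const, nsmul_eq_mul]

theorem sum_support_comp_period (f : ℕ → ℚ) :
    ∑ x ∈ σ.support, f (period σ x) = (σ.cycleType.map fun k ↦ k * f k).sum := by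
  have cycleOf_mem (x : X) (hx : x ∈ σ.support) : σ.cycleOf x ∈ σ.cycleFactorsFinset :=
    cycleOf_mem_cycleFactorsFinset_iff.2 hx
  rw [← sum_fiberwise_of_maps_to cycleOf_mem, cycleType_def, Multiset.map_map, sum_map_val]
  refine sum_congr rfl fun c hc ↦ ?_
  rw [filter_cycleOf_eq_support σ hc, sum_cycle_comp_period σ hc, Function.comp_apply,
    Function.comp_apply]

theorem sum_comp_period_eq_sum_parts (f : ℕ → ℚ) :
    ∑ x : X, f (period σ x) = (σ.partition.parts.map fun k ↦ k * f k).sum := by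
  have period_eq_one {x : X} (hx : x ∈ σ.supportᶜ) : period σ x = 1 :=
    period_eq_one_iff.2 (by simpa using hx)
  rw [parts_partition, Multiset.map_add, Multiset.sum_add, ← sum_add_sum_compl σ.support,
    sum_support_comp_period, sum_congr rfl fun x hx ↦ congrArg f (period_eq_one hx)]
  simp [card_compl]

theorem sum_comp_period (f : ℕ → ℚ) :
    ∑ x : X, f (period σ x) =
      ∑ k ∈ Icc 1 (Fintype.card X), mPart _ σ.partition k * (k * f k) := by
  rw [sum_comp_period_eq_sum_parts, sum_parts_map]

theorem sum_card_fixedBy_pow_pow (m : ℕ) :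
    (∑ i ∈ range (orderOf σ), Nat.card (fixedBy X ((σ ^ i) ^ m)) : ℚ) =
      orderOf σ * ∑ k ∈ Icc 1 (Fintype.card X), mPart _ σ.partition k * (k.gcd m : ℚ) := by
  calc
    _ = ∑ x : X, (#{i ∈ range (orderOf σ) | period σ x ∣ m * i} : ℚ) := by
      simp only [← pow_mul, card_fixedBy_pow, card_filter, Nat.cast_sum, mul_comm _ m]
      exact sum_comm
    _ = ∑ x : X, orderOf σ * ((period σ x).gcd m / period σ x : ℚ) := sum_congr rfl fun x _ ↦
      card_filter_range_dvd_mul (period_dvd_orderOf σ x) (orderOf_pos σ) m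
    _ = _ := by
      rw [← mul_sum, sum_comp_period σ fun k ↦ (k.gcd m / k : ℚ)]
      refine congrArg _ (sum_congr rfl fun k hk ↦ ?_)
      have := (mem_Icc.1 hk).1
      field_simp

theorem sum_card_fixedBy_pow_sq :
    (∑ i ∈ range (orderOf σ), Nat.card (fixedBy X (σ ^ i)) ^ 2 : ℚ) =
      orderOf σ * ∑ k ∈ Icc 1 (Fintype.card X), ∑ l ∈ Icc 1 (Fintype.card X),
        mPart _ σ.partition k * mPart _ σ.partition l * (k.gcd l : ℚ) := by
  calc
    _ = ∑ x : X, ∑ y : X, (#{i ∈ range (orderOf σ) | period σ x ∣ i ∧ period σ y ∣ i} : ℚ) := by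
      simp only [card_fixedBy_pow, card_filter, Nat.cast_sum, sq, sum_mul_sum]
      rw [sum_comm]
      refine sum_congr rfl fun x _ ↦ ?_
      rw [sum_comm]
      refine sum_congr rfl fun y _ ↦ sum_congr rfl fun i _ ↦ ?_
      split_ifs <;> simp_all
    _ = ∑ x : X, ∑ y : X,
        orderOf σ * ((period σ x).gcd (period σ y) / (period σ x * period σ y) : ℚ) :=
      sum_congr rfl fun x _ ↦ sum_congr rfl fun y _ ↦ card_filter_range_dvd_and_dvd
        (period_dvd_orderOf σ x) (period_dvd_orderOf σ y) (orderOf_pos σ)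
    _ = _ := by
      simp only [← mul_sum]
      rw [sum_comp_period σ fun k ↦ ∑ y : X, (k.gcd (period σ y) / (k * period σ y) : ℚ)]
      refine congrArg _ (sum_congr rfl fun k hk ↦ ?_)
      rw [sum_comp_period σ fun l ↦ (k.gcd l / (k * l) : ℚ), mul_sum, mul_sum]
      refine sum_congr rfl fun l hl ↦ ?_
      have hk_pos := (mem_Icc.1 hk).1
      have hl_pos := (mem_Icc.1 hl).1
      field_simp

theorem card_orbits_zpowers :
    Nat.card (orbitRel.Quotient (Subgroup.zpowers σ) X) =
      ∑ k ∈ Icc 1 (Fintype.card X), mPart _ σ.partition k := by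
  refine Nat.eq_of_mul_eq_mul_left (orderOf_pos σ) ?_
  rw [← sum_card_fixedBy_pow]
  have sum_fixed := sum_card_fixedBy_pow_pow σ 1
  simp only [pow_one, Nat.gcd_one_right, Nat.cast_one, mul_one] at sum_fixed
  exact_mod_cast sum_fixed

end CycleLengths

section OffDiagPairs

/-- Unordered pairs of distinct elements of `X`; for `X = Fin n` they index the `ℤ₂` factors
of `D_n`. -/
abbrev OffDiagPair (X : Type*) := {s : Sym2 X // ¬s.IsDiag}

theorem two_mul_card_edgeSet {X : Type*} [Fintype X] (Γ : SimpleGraph X) [DecidableRel Γ.Adj] :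
    2 * Nat.card Γ.edgeSet = #{p : X × X | Γ.Adj p.1 p.2} := by
  classical
  rw [Nat.card_eq_fintype_card, ← SimpleGraph.edgeFinset_card, Γ.two_mul_card_edgeFinset]

theorem two_mul_card_subtype_offDiagPair {X : Type*} [Fintype X] [DecidableEq X]
    (P : Sym2 X → Prop) [DecidablePred P] :
    2 * Nat.card {s : OffDiagPair X // P s} = #{p : X × X | p.1 ≠ p.2 ∧ P s(p.1, p.2)} := by
  classical
  have edges_equiv :
      {s : OffDiagPair X // P s} ≃ (SimpleGraph.fromEdgeSet {s | P s}).edgeSet :=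
    (Equiv.subtypeSubtypeEquivSubtypeInter _ _).trans <| Equiv.subtypeEquivRight fun s ↦ by
      rw [SimpleGraph.edgeSet_fromEdgeSet, and_comm]
      rfl
  rw [Nat.card_congr edges_equiv, two_mul_card_edgeSet]
  congr 1
  ext ⟨x, y⟩
  simp [and_comm]

variable {G X : Type*} [Group G] [MulAction G X]

instance : MulAction G (OffDiagPair X) where
  smul g s := ⟨s.1.map (g • ·), (Sym2.isDiag_map (MulAction.injective g)).not.2 s.2⟩
  one_smul s := Subtype.ext <| (Sym2.map_congr fun x _ ↦ one_smul G x).trans <|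
    congrFun Sym2.map_id s.1
  mul_smul g h s := Subtype.ext <| (Sym2.map_congr fun x _ ↦ mul_smul g h x).trans <|
    (Sym2.map_map s.1).symm

theorem smul_mk_eq_mk_iff {g : G} {x y : X} :
    s(g • x, g • y) = s(x, y) ↔ g • x = x ∧ g • y = y ∨ g • x = y ∧ g ^ 2 • x = x := by
  rw [Sym2.eq_iff, sq, mul_smul]
  exact or_congr_right (and_congr_right fun h ↦ by rw [h])

theorem card_filter_ne_and_smul_mk_eq_mk [Fintype X] [DecidableEq X] (g : G) :
    #{p : X × X | p.1 ≠ p.2 ∧ s(g • p.1, g • p.2) = s(p.1, p.2)} + 2 * #{x : X | g • x = x} =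
      #{x : X | g • x = x} ^ 2 + #{x : X | g ^ 2 • x = x} := by
  set fixed : Finset X := {x | g • x = x} with fixed_def
  set swapped : Finset X := ({x | g ^ 2 • x = x} : Finset X) \ fixed with swapped_def
  have fixed_subset : fixed ⊆ ({x | g ^ 2 • x = x} : Finset X) := fun x hx ↦ by
    have hx : g • x = x := (mem_filter.1 hx).2
    simp [sq, mul_smul, hx]
  have pairs_eq : ({p : X × X | p.1 ≠ p.2 ∧ s(g • p.1, g • p.2) = s(p.1, p.2)} : Finset _) =
      fixed.offDiag ∪ swapped.image fun x ↦ (x, g • x) := by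
    ext ⟨x, y⟩
    simp only [smul_mk_eq_mk_iff, mem_filter_univ, mem_union, mem_offDiag, mem_image, mem_sdiff,
      Prod.mk.injEq, fixed_def, swapped_def]
    grind
  have pairs_disjoint : Disjoint fixed.offDiag (swapped.image fun x ↦ (x, g • x)) := by
    rw [disjoint_left]
    rintro ⟨x, y⟩ hxy
    simp only [mem_image, Prod.mk.injEq, swapped_def, mem_sdiff]
    grind
  have card_swapped : #swapped + #fixed = #{x : X | g ^ 2 • x = x} :=
    card_sdiff_add_card_eq_card fixed_subset
  have card_fixed_le := Nat.le_mul_self #fixed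
  rw [pairs_eq, card_union_of_disjoint pairs_disjoint, offDiag_card,
    card_image_of_injective _ fun x y h ↦ congrArg Prod.fst h, sq]
  omega

theorem two_mul_card_fixedBy_offDiagPair [Finite X] (g : G) :
    2 * Nat.card (fixedBy (OffDiagPair X) g) + 2 * Nat.card (fixedBy X g) =
      Nat.card (fixedBy X g) ^ 2 + Nat.card (fixedBy X (g ^ 2)) := by
  classical
  have := Fintype.ofFinite X
  have card_fixedBy (h : G) : Nat.card (fixedBy X h) = #{x : X | h • x = x} :=
    Nat.subtype_card _ fun x ↦ mem_filter_univ x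
  have fixed_pairs_equiv : fixedBy (OffDiagPair X) g ≃
      {s : OffDiagPair X // Sym2.map (g • ·) s.1 = s.1} :=
    Equiv.subtypeEquivRight fun s ↦ Subtype.ext_iff
  rw [Nat.card_congr fixed_pairs_equiv, card_fixedBy, card_fixedBy,
    two_mul_card_subtype_offDiagPair fun s ↦ Sym2.map (g • ·) s = s]
  exact card_filter_ne_and_smul_mk_eq_mk g

end OffDiagPairs

section PairOrbits

theorem sum_Icc_sum_Icc_of_symm {n : ℕ} {h : ℕ → ℕ → ℕ} (h_symm : ∀ k l, h k l = h l k) :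
    ∑ k ∈ Icc 1 n, ∑ l ∈ Icc 1 n, h k l =
      ∑ k ∈ Icc 1 n, h k k + 2 * ∑ k ∈ Icc 1 n, ∑ l ∈ Icc (k + 1) n, h k l := by
  induction n with
  | zero => rfl
  | succ n ih =>
    have inner_succ (k : ℕ) (hk : k ∈ Icc 1 n) :
        ∑ l ∈ Icc (k + 1) (n + 1), h k l = ∑ l ∈ Icc (k + 1) n, h k l + h k (n + 1) :=
      sum_Icc_succ_top (by grind) _
    simp only [sum_Icc_succ_top (Nat.le_add_left 1 n), sum_add_distrib, ih,
      sum_congr rfl inner_succ, h_symm (n + 1), Icc_eq_empty (Nat.not_succ_le_self (n + 1)),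
      sum_empty]
    ring

theorem two_mul_choose_two_add (m : ℕ) : 2 * m.choose 2 + m = m * m := by
  induction m with
  | zero => rfl
  | succ m ih =>
    rw [Nat.choose_succ_succ', Nat.choose_one_right]
    linear_combination ih

theorem two_mul_half_add_two (k : ℕ) : 2 * (k / 2) + 2 = k + k.gcd 2 := by
  rcases Nat.even_or_odd' k with ⟨j, rfl | rfl⟩
  · simp
  · rw [Nat.gcd_comm, Nat.gcd_mul_left_add_right, Nat.gcd_one_right]
    lia

theorem two_mul_fPart_add {n : ℕ} (lam : n.Partition) :
    2 * fPart n lam + 2 * ∑ k ∈ Icc 1 n, mPart n lam k =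
      ∑ k ∈ Icc 1 n, ∑ l ∈ Icc 1 n, mPart n lam k * mPart n lam l * k.gcd l +
        ∑ k ∈ Icc 1 n, mPart n lam k * k.gcd 2 := by
  have diagonal_terms :
      2 * ∑ k ∈ Icc 1 n, (mPart n lam k * (k / 2) + k * (mPart n lam k).choose 2) +
          2 * ∑ k ∈ Icc 1 n, mPart n lam k =
        ∑ k ∈ Icc 1 n, mPart n lam k * mPart n lam k * k.gcd k +
          ∑ k ∈ Icc 1 n, mPart n lam k * k.gcd 2 := by
    simp only [mul_sum, ← sum_add_distrib, Nat.gcd_self, ← two_mul_choose_two_add]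
    exact sum_congr rfl fun k _ ↦ by linear_combination mPart n lam k * two_mul_half_add_two k
  rw [sum_Icc_sum_Icc_of_symm fun k l ↦ by rw [Nat.gcd_comm, mul_comm (mPart n lam k)], fPart]
  omega

theorem card_orbits_zpowers_offDiagPair {X : Type*} [Fintype X] [DecidableEq X]
    (σ : Equiv.Perm X) :
    Nat.card (orbitRel.Quotient (Subgroup.zpowers σ) (OffDiagPair X)) =
      fPart (Fintype.card X) σ.partition := by
  have sum_fixed := sum_congr (rfl : range (orderOf σ) = _) fun i _ ↦
    two_mul_card_fixedBy_offDiagPair (X := X) (σ ^ i)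
  simp only [sum_add_distrib, ← mul_sum, sum_card_fixedBy_pow, card_orbits_zpowers] at sum_fixed
  have sum_sq := sum_card_fixedBy_pow_sq σ
  have sum_pow_two := sum_card_fixedBy_pow_pow σ 2
  norm_cast at sum_sq sum_pow_two
  rw [sum_sq, sum_pow_two, ← mul_add (orderOf σ), ← two_mul_fPart_add] at sum_fixed
  refine Nat.eq_of_mul_eq_mul_left (orderOf_pos σ) ?_
  linarith

end PairOrbits

section CycleTypes

theorem parts_eq_filter_add_replicate {n : ℕ} (lam : n.Partition) :
    lam.parts = lam.parts.filter (2 ≤ ·) + Multiset.replicate (mPart n lam 1) 1 := by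
  have filter_not : lam.parts.filter (¬2 ≤ ·) = lam.parts.filter (· = 1) :=
    Multiset.filter_congr fun k hk ↦ by grind [lam.parts_pos hk]
  rw [mPart, ← Multiset.filter_eq', ← filter_not, Multiset.filter_add_not]

theorem sum_filter_parts_add {n : ℕ} (lam : n.Partition) :
    (lam.parts.filter (2 ≤ ·)).sum + mPart n lam 1 = n := by
  have parts_sum := lam.parts_sum
  rwa [parts_eq_filter_add_replicate, Multiset.sum_add, Multiset.sum_replicate, smul_eq_mul,
    mul_one] at parts_sum

theorem partition_ext_filter {n : ℕ} {lam mu : n.Partition}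
    (h : lam.parts.filter (2 ≤ ·) = mu.parts.filter (2 ≤ ·)) : lam = mu := by
  have mPart_one_eq : mPart n lam 1 = mPart n mu 1 := by
    have hlam := sum_filter_parts_add lam
    have hmu := sum_filter_parts_add mu
    rw [h] at hlam
    lia
  ext1
  rw [parts_eq_filter_add_replicate lam, parts_eq_filter_add_replicate mu, h, mPart_one_eq]

theorem prod_pow_mul_factorial {n : ℕ} (lam : n.Partition) :
    ∏ k ∈ Icc 1 n, k ^ mPart n lam k * (mPart n lam k)! =
      (mPart n lam 1)! * (lam.parts.filter (2 ≤ ·)).prod *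
        ∏ k ∈ (lam.parts.filter (2 ≤ ·)).toFinset, ((lam.parts.filter (2 ≤ ·)).count k)! := by
  set long := lam.parts.filter (2 ≤ ·)
  have factor_eq_one {k : ℕ} (hk : k ∉ lam.parts) : k ^ mPart n lam k * (mPart n lam k)! = 1 := by
    rw [mPart, Multiset.count_eq_zero_of_notMem hk, pow_zero, Nat.factorial_zero, one_mul]
  have count_long (k : ℕ) (hk : k ∈ long.toFinset) : long.count k = mPart n lam k :=
    Multiset.count_filter_of_pos (Multiset.of_mem_filter (Multiset.mem_toFinset.1 hk))
  have restrict_support : ∏ k ∈ Icc 1 n, k ^ mPart n lam k * (mPart n lam k)! =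
      ∏ k ∈ insert 1 long.toFinset, k ^ mPart n lam k * (mPart n lam k)! := by
    refine prod_congr_of_eq_on_inter (fun k _ hk_long ↦ factor_eq_one fun hk_parts ↦ ?_)
      (fun k _ hk ↦ factor_eq_one fun hk_parts ↦ ?_) fun _ _ _ ↦ rfl
    · have : k ≠ 1 ∧ ¬2 ≤ k := by simpa [long, hk_parts] using hk_long
      have := lam.parts_pos hk_parts
      lia
    · exact hk (mem_Icc.2 ⟨lam.parts_pos hk_parts, lam.le_of_mem_parts hk_parts⟩)
  rw [restrict_support, prod_insert (by simp [long]), one_pow, one_mul, mul_assoc,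
    prod_multiset_count, ← prod_mul_distrib]
  exact congrArg _ (prod_congr rfl fun k hk ↦ by rw [count_long k hk])

variable {X : Type*} [Fintype X] [DecidableEq X]

theorem partition_eq_iff {σ : Equiv.Perm X} {lam : (Fintype.card X).Partition} :
    σ.partition = lam ↔ σ.cycleType = lam.parts.filter (2 ≤ ·) := by
  rw [← Equiv.Perm.filter_parts_partition_eq_cycleType]
  exact ⟨fun h ↦ by rw [h], partition_ext_filter⟩

theorem card_filter_partition_eq_mul (lam : (Fintype.card X).Partition) :
    #{σ : Equiv.Perm X | σ.partition = lam} *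
      ∏ k ∈ Icc 1 (Fintype.card X), k ^ mPart _ lam k * (mPart _ lam k)! = (Fintype.card X)! := by
  have sum_filter := sum_filter_parts_add lam
  have card_cycleType := Equiv.Perm.card_of_cycleType_mul_eq X (lam.parts.filter (2 ≤ ·))
  rw [if_pos ⟨by lia, fun k hk ↦ (Multiset.mem_filter.1 hk).2⟩,
    show Fintype.card X - (lam.parts.filter (2 ≤ ·)).sum = mPart _ lam 1 by lia,
    ← prod_pow_mul_factorial] at card_cycleType
  simpa only [partition_eq_iff] using card_cycleType

theorem sum_comp_partition (f : (Fintype.card X).Partition → ℚ) :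
    ∑ σ : Equiv.Perm X, f σ.partition = (Fintype.card X)! *
      ∑ lam, (∏ k ∈ Icc 1 (Fintype.card X), ((k : ℚ) ^ mPart _ lam k * (mPart _ lam k)!))⁻¹ *
        f lam := by
  rw [← sum_fiberwise univ Equiv.Perm.partition, mul_sum]
  refine sum_congr rfl fun lam _ ↦ ?_
  have card_mul : (#{σ : Equiv.Perm X | σ.partition = lam} : ℚ) *
      ∏ k ∈ Icc 1 (Fintype.card X), ((k : ℚ) ^ mPart _ lam k * (mPart _ lam k)!) =
      (Fintype.card X)! := mod_cast card_filter_partition_eq_mul lam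
  have prod_ne_zero := right_ne_zero_of_mul <|
    card_mul.trans_ne <| Nat.cast_ne_zero.2 (Nat.factorial_ne_zero _)
  rw [← card_mul, mul_assoc, mul_inv_cancel_left₀ prod_ne_zero, ← nsmul_eq_mul, ← sum_const]
  exact sum_congr rfl fun σ hσ ↦ by rw [(mem_filter.1 hσ).2]

end CycleTypes

section DiagonalElements

attribute [local instance] arrowAction

variable {n : ℕ}

/-- The exponent data of `D_n` with the redundant diagonal coordinates of `DElem` dropped. -/
abbrev Exponents (n : ℕ) := (Fin n → ZMod 4) × (OffDiagPair (Fin n) → ZMod 2)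

/-- `DElem n` as a product; the diagonal coordinates are refilled with `0`. -/
def dElemEquiv (n : ℕ) : DElem n ≃ Exponents n where
  toFun x := (x.1.1, fun s ↦ x.1.2 s)
  invFun ab := ⟨(ab.1, fun s ↦ if h : s.IsDiag then 0 else ab.2 ⟨s, h⟩), fun _ h ↦ dif_pos h⟩
  left_inv x := Subtype.ext <| Prod.ext rfl <| funext fun s ↦ by
    by_cases h : s.IsDiag
    · simp [h, x.2 s h]
    · simp [h]
  right_inv ab := Prod.ext rfl <| funext fun s ↦ dif_neg s.2

theorem dElemEquiv_eq_smul_iff {σ : Equiv.Perm (Fin n)} {x y : DElem n} :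
    dElemEquiv n y = σ • dElemEquiv n x ↔
      (∀ j, y.1.1 j = x.1.1 (σ⁻¹ j)) ∧ ∀ s, y.1.2 s = x.1.2 (Sym2.map (⇑σ⁻¹) s) := by
  rw [Prod.ext_iff, funext_iff, funext_iff]
  refine and_congr_right fun _ ↦ ⟨fun h s ↦ ?_, fun h s ↦ h s⟩
  by_cases hs : s.IsDiag
  · rw [y.2 s hs, x.2 _ ((Sym2.isDiag_map σ⁻¹.injective).2 hs)]
  · exact h ⟨s, hs⟩

theorem diagOrbitCount_eq_card_orbits (n : ℕ) :
    diagOrbitCount n = Nat.card (orbitRel.Quotient (Equiv.Perm (Fin n)) (Exponents n)) := by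
  rw [diagOrbitCount]
  simp only [← dElemEquiv_eq_smul_iff]
  refine Nat.card_congr <| (Setoid.quotientKerEquivRange _).symm.trans <|
    Quotient.congr (dElemEquiv n) fun x y ↦ ?_
  have orbit_eq (z : DElem n) :
      {y | ∃ σ : Equiv.Perm (Fin n), dElemEquiv n y = σ • dElemEquiv n z} =
        dElemEquiv n ⁻¹' orbit (Equiv.Perm (Fin n)) (dElemEquiv n z) :=
    Set.ext fun y ↦ exists_congr fun σ ↦ eq_comm
  rw [Setoid.ker_def, orbit_eq, orbit_eq, (dElemEquiv n).surjective.preimage_injective.eq_iff,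
    orbit_eq_iff]
  rfl

theorem card_fixedBy_exponents (σ : Equiv.Perm (Fin n)) :
    Nat.card (fixedBy (Exponents n) σ) =
      4 ^ (∑ k ∈ Icc 1 (Fintype.card (Fin n)), mPart _ σ.partition k) *
        2 ^ fPart _ σ.partition := by
  have fixedBy_prod : fixedBy (Exponents n) σ =
      fixedBy (Fin n → ZMod 4) σ ×ˢ fixedBy (OffDiagPair (Fin n) → ZMod 2) σ :=
    Set.ext fun _ ↦ Prod.ext_iff
  rw [fixedBy_prod, Nat.card_congr (Equiv.Set.prod _ _), Nat.card_prod, card_fixedBy_arrow,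
    card_fixedBy_arrow, Nat.card_zmod, Nat.card_zmod, card_orbits_zpowers,
    card_orbits_zpowers_offDiagPair]

theorem diagOrbitCount_mul_factorial (n : ℕ) :
    diagOrbitCount n * (Fintype.card (Fin n))! = ∑ σ : Equiv.Perm (Fin n),
      4 ^ (∑ k ∈ Icc 1 (Fintype.card (Fin n)), mPart _ σ.partition k) *
        2 ^ fPart _ σ.partition := by
  have burnside := sum_natCard_fixedBy (Equiv.Perm (Fin n)) (Exponents n)
  rwa [Nat.card_perm, Nat.card_eq_fintype_card (α := Fin n),
    sum_congr rfl fun σ _ ↦ card_fixedBy_exponents σ, ← diagOrbitCount_eq_card_orbits,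
    eq_comm] at burnside

end DiagonalElements

end DiagonalClifford

/-- Closed orbit-counting formula:
`|D_n / S_n| = ∑_{λ ⊢ n} (∏_k k^{m_k} m_k!)⁻¹ · 4^{∑_k m_k} · 2^{f(λ)}`. -/
theorem stmt14 (n : ℕ) :
    (diagOrbitCount n : ℚ) =
      ∑ lam : Nat.Partition n,
        (∏ k ∈ Finset.Icc 1 n,
            ((k : ℚ) ^ mPart n lam k * (Nat.factorial (mPart n lam k) : ℚ)))⁻¹ *
          4 ^ (∑ k ∈ Finset.Icc 1 n, mPart n lam k) * 2 ^ fPart n lam := by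
  have burnside := congrArg (Nat.cast : ℕ → ℚ) (DiagonalClifford.diagOrbitCount_mul_factorial n)
  push_cast at burnside
  rw [DiagonalClifford.sum_comp_partition fun lam ↦
      4 ^ (∑ k ∈ Finset.Icc 1 _, mPart _ lam k) * 2 ^ fPart _ lam, Fintype.card_fin,
    mul_comm] at burnside
  simp only [mul_assoc]
  exact mul_left_cancel₀ (Nat.cast_ne_zero.2 n.factorial_ne_zero) burnside
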